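/- Let W be a Weyl candidate on Minkowski space V, n a unit timelike vector, E = E(W) and B = B(W) its electric and magnetic parts, ε the spatial volume form, and l_{μν} := η_{μν} + 2 n_μ n_ν. Then the right dual of W satisfies (W*)_{μνλσ} = 2( l_{μ[λ} B_{σ]ν} − l_{ν[λ} B_{σ]μ} + n_{[λ} E_{σ]τ} ε^{τ}_{ μν} + n_{[μ} E_{ν]τ} ε^{τ}_{ λσ} ), where square brackets denote antisymmetrization with weight ½ and indices are raised with η. -/

import Mathlib

noncomputable section

/-- Minkowski space `V = ℝ⁴`. -/
abbrev V4 : Type := Fin 4 → ℝ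

/-- The Minkowski bilinear form of signature `(-,+,+,+)`. -/
def η (x y : V4) : ℝ := -(x 0 * y 0) + x 1 * y 1 + x 2 * y 2 + x 3 * y 3

/-- The standard basis of `V4`. -/
def e4 (a : Fin 4) : V4 := Pi.single a 1

/-- Components of the Minkowski metric `diag(-1,1,1,1)` (its own inverse). -/
def ηm (a b : Fin 4) : ℝ := if a = b then (if a = (0 : Fin 4) then -1 else 1) else 0

/-- A 4-linear form on `V4`, given by its components in the standard basis. -/
abbrev T4 : Type := Fin 4 → Fin 4 → Fin 4 → Fin 4 → ℝ

/-- A bilinear form on `V4`, given by its components in the standard basis. -/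
abbrev T2 : Type := Fin 4 → Fin 4 → ℝ

/-- Evaluation of a 4-linear form (given by components) on vectors. -/
def eval4 (W : T4) (x y z w : V4) : ℝ :=
  ∑ a : Fin 4, ∑ b : Fin 4, ∑ c : Fin 4, ∑ d : Fin 4, W a b c d * x a * y b * z c * w d

/-- The alternating volume 4-form with `vol(e₀,e₁,e₂,e₃) = 1`. -/
def volv (x y z w : V4) : ℝ := Matrix.det (Matrix.of ![x, y, z, w])

/-- Components `η_{αβγδ}` of the volume form. -/
def volc (a b c d : Fin 4) : ℝ := volv (e4 a) (e4 b) (e4 c) (e4 d)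

/-- Left dual `(*W)_{μνλρ} = ½ η_{μν}{}^{αβ} W_{αβλρ}`. -/
def leftDual (W : T4) : T4 := fun μ ν lam ρ =>
  (1/2) * ∑ γ : Fin 4, ∑ δ : Fin 4, ∑ a : Fin 4, ∑ b : Fin 4,
    volc μ ν γ δ * ηm γ a * ηm δ b * W a b lam ρ

/-- Right dual `(W*)_{μνλρ} = ½ W_{μν}{}^{αβ} η_{αβλρ}`. -/
def rightDual (W : T4) : T4 := fun μ ν lam ρ =>
  (1/2) * ∑ γ : Fin 4, ∑ δ : Fin 4, ∑ a : Fin 4, ∑ b : Fin 4,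
    W μ ν a b * ηm a γ * ηm b δ * volc γ δ lam ρ

/-- A Weyl candidate: pair antisymmetries, pair exchange, first Bianchi, trace-free. -/
def IsWeyl (W : T4) : Prop :=
  (∀ x y z w : V4, eval4 W x y z w = - eval4 W y x z w) ∧
  (∀ x y z w : V4, eval4 W x y z w = - eval4 W x y w z) ∧
  (∀ x y z w : V4, eval4 W x y z w = eval4 W z w x y) ∧
  (∀ x y z w : V4, eval4 W x y z w + eval4 W x z w y + eval4 W x w y z = 0) ∧
  (∀ x y : V4, ∑ a : Fin 4, ∑ b : Fin 4, ηm a b * eval4 W (e4 a) x (e4 b) y = 0)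

/-- Electric part `E(W)_{ab} = W(e_a, n, e_b, n)`. -/
def Epart (W : T4) (n : V4) : T2 := fun a b => eval4 W (e4 a) n (e4 b) n

/-- Magnetic part `B(W)_{ab} = (W*)(e_a, n, e_b, n)`. -/
def Bpart (W : T4) (n : V4) : T2 := fun a b => eval4 (rightDual W) (e4 a) n (e4 b) n

/-- Raise both indices of a bilinear form's components. -/
def up2 (S : T2) : T2 := fun a b => ∑ c : Fin 4, ∑ d : Fin 4, ηm a c * ηm b d * S c d

/-- Full contraction `S_{ab} T^{ab}`. -/
def contr2 (S T : T2) : ℝ := ∑ a : Fin 4, ∑ b : Fin 4, S a b * up2 T a b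

/-!
The proof applies twice the decomposition of a two-form with respect to `n`,
`η(n,n) ⋆F_{λσ} = n_λ (ι_n ⋆F)_σ - n_σ (ι_n ⋆F)_λ + (ι_n F)^τ ε_{τλσ}`, which comes from
antisymmetrizing over five indices. Trace-freeness of `W` is the Bianchi identity of `W*` and vice
versa, so `W*` is again a Weyl candidate; its electric and magnetic parts are `B` and `-E`. Hence
both pairs of indices of `W*` can be decomposed, and the only term not already in the required form
is `-B^{ρτ} ε_{ρμν} ε_{τλσ}`. As `B` is trace-free it annihilates `ε` when acting as a derivation,
which turns this term into a combination of products of `B` with `h = η + n♭ ⊗ n♭`. The remaining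
terms `n n B` change `h` into `l = η + 2 n♭ ⊗ n♭`.
-/

/-- Antisymmetry of a bilinear form, in components: `F` is a two-form. -/
def IsTwoForm (F : T2) : Prop := ∀ a b, F b a = -F a b

/-- The covector `n♭ = η(n, ·)`, in components `n_μ`. -/
def lower (n : V4) : V4 := fun μ => η n (e4 μ)

/-- The interior product `ι_n F = F(n, ·)`. -/
def interiorProd (n : V4) (F : T2) : V4 := fun b => ∑ a, n a * F a b

/-- The Hodge dual `(⋆F)_{λρ} = ½ F^{αβ} η_{αβλρ}` of a two-form, encoded so that the right dual of
`W` is by `rfl` the Hodge dual in the last pair of indices. -/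
def hodge (F : T2) : T2 := fun lam ρ =>
  (1/2) * ∑ γ : Fin 4, ∑ δ : Fin 4, ∑ a : Fin 4, ∑ b : Fin 4,
    F a b * ηm a γ * ηm b δ * volc γ δ lam ρ

/-- Components `ε_{abc}` of the spatial volume form. -/
def spatialVol (n : V4) (a b c : Fin 4) : ℝ := volv n (e4 a) (e4 b) (e4 c)

/-- The metric `h = η + n♭ ⊗ n♭` induced on the orthogonal complement of a unit timelike `n`. -/
def spatialMetric (n : V4) : T2 := fun μ ν => ηm μ ν + lower n μ * lower n ν

/-- The positive definite metric `l = η + 2 n♭ ⊗ n♭` attached to a unit timelike `n`. -/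
def euclideanMetric (n : V4) : T2 := fun μ ν => ηm μ ν + 2 * lower n μ * lower n ν

/-- The two-form `W(e_σ, n, ·, ·)`; up to sign, contracting it once more with `n` gives the
electric part. -/
def slice (W : T4) (n : V4) (σ : Fin 4) : T2 := fun a b => ∑ c, n c * W σ c a b

/-- The component form of `IsWeyl`. Pair exchange is left out because it follows, see
`IsWeylTensor.pair_swap`. -/
structure IsWeylTensor (W : T4) : Prop where
  swap_left (a b c d : Fin 4) : W b a c d = -W a b c d
  swap_right (a b c d : Fin 4) : W a b d c = -W a b c d
  bianchi (a b c d : Fin 4) : W a b c d + W a c d b + W a d b c = 0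
  trace (b d : Fin 4) : ∑ a, ηm a a * W a b a d = 0

lemma e4_apply (a b : Fin 4) : e4 a b = if b = a then 1 else 0 := by
  simp [e4, Pi.single_apply]

lemma ηm_mul_self (a : Fin 4) : ηm a a * ηm a a = 1 := by
  simp only [ηm]
  split_ifs <;> norm_num

lemma ηm_comm (a b : Fin 4) : ηm a b = ηm b a := by
  grind [ηm]

lemma lower_apply (n : V4) (μ : Fin 4) : lower n μ = ηm μ μ * n μ := by
  fin_cases μ <;> simp [lower, η, ηm, e4_apply]

-- The matrix of `η` is its own inverse, so `η f g` is also the contraction `f_τ g^τ` of covectors.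
lemma η_eq_sum (f g : Fin 4 → ℝ) : η f g = ∑ a, ηm a a * (f a * g a) := by
  simp [η, ηm, Fin.sum_univ_four]

lemma η_ηm (f : Fin 4 → ℝ) (c : Fin 4) : η f (ηm c) = f c := by
  fin_cases c <;> simp [η, ηm]

lemma η_sub_left (f g h : Fin 4 → ℝ) : η (fun b => f b - g b) h = η f h - η g h := by
  simp only [η]
  ring

lemma η_mul_sub_mul_right (f g h : Fin 4 → ℝ) (s t : ℝ) :
    η f (fun b => g b * s - h b * t) = η f g * s - η f h * t := by
  simp only [η]
  ring

lemma sum_sum_mul_ηm_mul (f g : Fin 4 → ℝ) :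
    ∑ τ, ∑ τ', f τ * ηm τ τ' * g τ' = η f g := by
  simp [η, ηm, Fin.sum_univ_four]

lemma η_lower (f n : V4) : η f (lower n) = ∑ a, n a * f a := by
  rw [η_eq_sum]
  refine Finset.sum_congr rfl fun a _ => ?_
  rw [lower_apply]
  linear_combination n a * f a * ηm_mul_self a

lemma lower_dotProduct (n x : V4) : lower n ⬝ᵥ x = η n x := by
  simp [dotProduct, η, lower_apply, ηm, Fin.sum_univ_four]

lemma dotProduct_e4 (f : Fin 4 → ℝ) (a : Fin 4) : f ⬝ᵥ e4 a = f a := by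
  simp [e4]

lemma eval4_e4 (W : T4) (a b c d : Fin 4) :
    eval4 W (e4 a) (e4 b) (e4 c) (e4 d) = W a b c d := by
  simp [eval4, e4_apply]

lemma volv_eq (x y z w : V4) : volv x y z w =
    (x 0 * y 1 - x 1 * y 0) * (z 2 * w 3 - z 3 * w 2)
    - (x 0 * y 2 - x 2 * y 0) * (z 1 * w 3 - z 3 * w 1)
    + (x 0 * y 3 - x 3 * y 0) * (z 1 * w 2 - z 2 * w 1)
    + (x 1 * y 2 - x 2 * y 1) * (z 0 * w 3 - z 3 * w 0)
    - (x 1 * y 3 - x 3 * y 1) * (z 0 * w 2 - z 2 * w 0)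
    + (x 2 * y 3 - x 3 * y 2) * (z 0 * w 1 - z 1 * w 0) := by
  have succ_two : (Fin.succ 2 : Fin 4) = 3 := rfl
  have castSucc_two : (Fin.castSucc 2 : Fin 4) = 2 := rfl
  simp [volv, Matrix.det_succ_row_zero, Fin.sum_univ_succ, Fin.succAbove, succ_two,
    castSucc_two]
  ring

lemma volv_swap_left (x y z w : V4) : volv y x z w = -volv x y z w := by
  rw [volv_eq, volv_eq]; ring

lemma volv_swap_right (x y z w : V4) : volv x y w z = -volv x y z w := by
  rw [volv_eq, volv_eq]; ring

lemma volv_pair_swap (x y z w : V4) : volv z w x y = volv x y z w := by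
  rw [volv_eq, volv_eq]; ring

lemma volv_rotate_left (x y z w : V4) : volv y z x w = volv x y z w := by
  rw [volv_eq, volv_eq]; ring

lemma sum_mul_volv (n x y z : V4) : ∑ c, n c * volv x y (e4 c) z = volv x y n z := by
  simp only [volv_eq, e4_apply, ite_mul, one_mul, zero_mul, Fin.isValue, Fin.sum_univ_four,
    Fin.reduceEq, ↓reduceIte]
  ring

-- Antisymmetrizing `f_ρ vol_{αβγδ}` over five indices gives zero in dimension four.
lemma dotProduct_mul_volv (f x a b c d : V4) :
    (f ⬝ᵥ x) * volv a b c d = (f ⬝ᵥ a) * volv x b c d + (f ⬝ᵥ b) * volv a x c d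
      + (f ⬝ᵥ c) * volv a b x d + (f ⬝ᵥ d) * volv a b c x := by
  simp only [dotProduct, Fin.sum_univ_four, volv_eq]
  ring

lemma sum_eq_zero_of_cyclic {ι M : Type*} [Fintype ι] [AddCommGroup M] [IsAddTorsionFree M]
    (g : ι → ι → ι → M) (hg : ∀ a b c, g a b c + g b c a + g c a b = 0) :
    ∑ a, ∑ b, ∑ c, g a b c = 0 := by
  have rotate (f : ι → ι → ι → M) : ∑ a, ∑ b, ∑ c, f b c a = ∑ a, ∑ b, ∑ c, f a b c := by
    rw [Finset.sum_comm]
    exact Finset.sum_congr rfl fun _ _ => Finset.sum_comm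
  have h : ∑ a, ∑ b, ∑ c, (g a b c + g b c a + g c a b) = 0 := by simp [hg]
  simp only [Finset.sum_add_distrib, rotate g, ← rotate fun a b c => g c a b] at h
  exact (nsmul_eq_zero_iff_right three_ne_zero).mp (by rw [← h]; abel)

lemma IsTwoForm.sum_mul_interiorProd {F : T2} (hF : IsTwoForm F) (n : V4) :
    ∑ b, n b * interiorProd n F b = 0 := by
  refine self_eq_neg.mp ?_
  simp only [interiorProd, Finset.mul_sum, ← Finset.sum_neg_distrib]
  rw [Finset.sum_comm]
  refine Finset.sum_congr rfl fun a _ => Finset.sum_congr rfl fun b _ => ?_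
  rw [hF b a]
  ring

lemma hodge_apply (F : T2) (lam ρ : Fin 4) :
    hodge F lam ρ = (1/2) * ∑ a, ∑ b, ηm a a * ηm b b * F a b * volc a b lam ρ := by
  simp [hodge, ηm, mul_comm]

lemma rightDual_apply (W : T4) (μ ν : Fin 4) : rightDual W μ ν = hodge (W μ ν) := rfl

lemma hodge_neg (F : T2) : hodge (-F) = -hodge F := by
  ext
  simp [hodge_apply]

lemma isTwoForm_hodge (F : T2) : IsTwoForm (hodge F) := fun a b => by
  simp [hodge_apply, volc, volv_swap_right (e4 _) (e4 _) (e4 a) (e4 b)]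

lemma IsTwoForm.hodge_eq {F : T2} (hF : IsTwoForm F) :
    hodge F = ![![0, F 2 3, -F 1 3, F 1 2], ![-F 2 3, 0, -F 0 3, F 0 2],
      ![F 1 3, F 0 3, 0, -F 0 1], ![-F 1 2, -F 0 2, F 0 1, 0]] := by
  ext lam ρ
  fin_cases lam <;> fin_cases ρ <;>
    simp [hodge_apply, Fin.sum_univ_four, ηm, volc, volv_eq, e4_apply, hF 0, hF 1 2, hF 1 3,
      hF 2 3] <;> ring

lemma IsTwoForm.hodge_hodge {F : T2} (hF : IsTwoForm F) : hodge (hodge F) = -F := by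
  have hdiag (a : Fin 4) : F a a = 0 := self_eq_neg.mp (hF a a)
  rw [(isTwoForm_hodge F).hodge_eq, hF.hodge_eq]
  ext lam ρ
  fin_cases lam <;> fin_cases ρ <;> simp [hdiag, hF 0, hF 1 2, hF 1 3, hF 2 3]

lemma volc_eq_hodge (c ν : Fin 4) :
    volc c ν = hodge fun a b => ηm c a * ηm ν b - ηm c b * ηm ν a := by
  ext lam ρ
  have contract (c : Fin 4) (f : Fin 4 → ℝ) : ∑ a, ηm a a * (f a * ηm c a) = f c := by
    rw [← η_eq_sum, η_ηm]
  have expand : ∑ a, ∑ b, ηm a a * ηm b b * (ηm c a * ηm ν b - ηm c b * ηm ν a) * volc a b lam ρ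
      = ∑ a, ηm a a * ((∑ b, ηm b b * (volc a b lam ρ * ηm ν b)) * ηm c a)
        - ∑ a, ηm a a * ((∑ b, ηm b b * (volc a b lam ρ * ηm c b)) * ηm ν a) := by
    simp only [Finset.mul_sum, Finset.sum_mul, ← Finset.sum_sub_distrib]
    exact Finset.sum_congr rfl fun a _ => Finset.sum_congr rfl fun b _ => by ring
  rw [hodge_apply, expand]
  simp only [contract, volc, volv_swap_left (e4 c) (e4 ν)]
  ring

lemma hodge_volc (c ν lam σ : Fin 4) :
    hodge (volc c ν) lam σ = ηm c σ * ηm ν lam - ηm c lam * ηm ν σ := by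
  have h : IsTwoForm fun a b => ηm c a * ηm ν b - ηm c b * ηm ν a := fun _ _ => by ring
  rw [volc_eq_hodge, h.hodge_hodge]
  simp

lemma interiorProd_hodge (n : V4) (F : T2) (σ : Fin 4) :
    interiorProd n (hodge F) σ =
      (1/2) * ∑ a, ∑ b, ηm a a * ηm b b * F a b * volv (e4 a) (e4 b) n (e4 σ) := by
  simp only [interiorProd, hodge_apply, volc, ← sum_mul_volv n, Finset.mul_sum]
  rw [Finset.sum_comm]
  refine Finset.sum_congr rfl fun a _ => ?_
  rw [Finset.sum_comm]
  exact Finset.sum_congr rfl fun b _ => Finset.sum_congr rfl fun c _ => by ring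

lemma IsTwoForm.η_interiorProd_spatialVol {F : T2} (hF : IsTwoForm F) (n : V4)
    (lam σ : Fin 4) :
    η (interiorProd n F) (fun b => spatialVol n b lam σ) = (1/2) * ∑ a, ∑ b,
      ηm a a * ηm b b * F a b * (lower n a * volv n (e4 b) (e4 lam) (e4 σ)
        + lower n b * volv (e4 a) n (e4 lam) (e4 σ)) := by
  have hfirst : ∑ a, ∑ b, ηm a a * ηm b b * F a b * (lower n a * spatialVol n b lam σ)
      = η (interiorProd n F) (fun b => spatialVol n b lam σ) := by
    simp only [η_eq_sum, interiorProd, Finset.sum_mul, Finset.mul_sum, lower_apply]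
    rw [Finset.sum_comm]
    refine Finset.sum_congr rfl fun b _ => Finset.sum_congr rfl fun a _ => ?_
    linear_combination ηm b b * F a b * n a * spatialVol n b lam σ * ηm_mul_self a
  have hsecond : ∑ a, ∑ b, ηm a a * ηm b b * F a b * (lower n b * volv (e4 a) n (e4 lam) (e4 σ))
      = η (interiorProd n F) (fun b => spatialVol n b lam σ) := by
    rw [← hfirst, Finset.sum_comm]
    refine Finset.sum_congr rfl fun a _ => Finset.sum_congr rfl fun b _ => ?_
    rw [hF a b, volv_swap_left n, spatialVol]
    ring
  simp only [spatialVol] at hfirst hsecond ⊢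
  simp only [mul_add, Finset.sum_add_distrib, hfirst, hsecond]
  ring

lemma IsTwoForm.hodge_decomposition {F : T2} (hF : IsTwoForm F) (n : V4) (lam σ : Fin 4) :
    η n n * hodge F lam σ = lower n lam * interiorProd n (hodge F) σ
      - lower n σ * interiorProd n (hodge F) lam
      + η (interiorProd n F) (fun b => spatialVol n b lam σ) := by
  have cramer (a b : Fin 4) := dotProduct_mul_volv (lower n) n (e4 a) (e4 b) (e4 lam) (e4 σ)
  simp only [lower_dotProduct, dotProduct_e4, volv_swap_right _ _ n] at cramer
  simp only [hF.η_interiorProd_spatialVol, interiorProd_hodge, hodge_apply, volc, Finset.mul_sum,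
    ← Finset.sum_add_distrib, ← Finset.sum_sub_distrib]
  refine Finset.sum_congr rfl fun a _ => Finset.sum_congr rfl fun b _ => ?_
  linear_combination (1/2) * ηm a a * ηm b b * F a b * cramer a b

lemma η_η_comm (f g : V4) (K : T2) :
    η (fun b => η f (K b)) g = η f fun d => η (fun b => K b d) g := by
  simp only [η]
  ring

-- A trace-free endomorphism annihilates the volume form when it acts as a derivation.
lemma η_spatialVol_of_trace_eq_zero {n : V4} {B : T2} (htr : ∑ a, ηm a a * B a a = 0)
    (hnB : interiorProd n B = 0) (b μ ν : Fin 4) :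
    η (B b) (fun d => spatialVol n d μ ν) =
      η (B ν) (fun d => spatialVol n b d μ) - η (B μ) (fun d => spatialVol n b d ν) := by
  have hcol (d : Fin 4) : (fun c => B c d) ⬝ᵥ n = 0 := by
    simpa [interiorProd, dotProduct, mul_comm] using congrFun hnB d
  have cramer (d : Fin 4) :=
    dotProduct_mul_volv (fun c => B c d) (e4 d) n (e4 b) (e4 μ) (e4 ν)
  simp only [hcol, dotProduct_e4, zero_mul, zero_add] at cramer
  have hsum : ∑ d, ηm d d * (B d d * volv n (e4 b) (e4 μ) (e4 ν)) = 0 := by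
    simp only [← mul_assoc, ← Finset.sum_mul, htr, zero_mul]
  simp only [cramer, mul_add, Finset.sum_add_distrib] at hsum
  simp only [η_eq_sum, spatialVol, volv_swap_right n (e4 b) (e4 μ), mul_neg,
    Finset.sum_neg_distrib]
  linear_combination hsum

lemma η_spatialVol_spatialVol {n : V4} (hn : η n n = -1) (c ν lam σ : Fin 4) :
    η (fun b => spatialVol n b c ν) (fun b => spatialVol n b lam σ) =
      spatialMetric n c lam * spatialMetric n ν σ
        - spatialMetric n c σ * spatialMetric n ν lam := by
  have hvol : IsTwoForm (volc c ν) := fun a b => volv_swap_right ..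
  have hint : interiorProd n (volc c ν) = fun b => spatialVol n b c ν := by
    ext b
    rw [interiorProd, spatialVol, ← volv_pair_swap, ← sum_mul_volv]
    rfl
  have hint_hodge (σ : Fin 4) : interiorProd n (hodge (volc c ν)) σ =
      ηm c σ * lower n ν - lower n c * ηm ν σ := by
    have lower_eq_sum (a : Fin 4) : ∑ x, n x * ηm a x = lower n a := by
      simp [lower_apply, ηm]
    simp only [interiorProd, hodge_volc, mul_sub, Finset.sum_sub_distrib, ← lower_eq_sum,
      Finset.mul_sum, Finset.sum_mul]
    congr! 2
    all_goals ring
  have h := hvol.hodge_decomposition n lam σ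
  rw [hn, hint, hint_hodge, hint_hodge, hodge_volc] at h
  simp only [spatialMetric]
  linear_combination -h

lemma η_spatialMetric {n f : V4} (hf : ∑ a, n a * f a = 0) (lam : Fin 4) :
    η f (fun d => spatialMetric n d lam) = f lam := by
  have hexpand : η f (fun d => spatialMetric n d lam) =
      η f (ηm lam) + η f (lower n) * lower n lam := by
    simp only [η, spatialMetric, ηm_comm lam]
    ring
  rw [hexpand, η_ηm, η_lower, hf, zero_mul, add_zero]

lemma η_η_spatialVol {n f : V4} (hn : η n n = -1) (hf : ∑ a, n a * f a = 0)
    (ν lam σ : Fin 4) :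
    η (fun b => η f fun d => spatialVol n b d ν) (fun b => spatialVol n b lam σ) =
      f lam * spatialMetric n ν σ - f σ * spatialMetric n ν lam := by
  rw [η_η_comm]
  simp only [η_spatialVol_spatialVol hn, η_mul_sub_mul_right, η_spatialMetric hf]

lemma η_η_spatialVol_of_trace_eq_zero {n : V4} (hn : η n n = -1) {B : T2}
    (htr : ∑ a, ηm a a * B a a = 0) (hnB : interiorProd n B = 0)
    (hBn : ∀ σ, ∑ a, n a * B σ a = 0) (μ ν lam σ : Fin 4) :
    η (fun b => η (B b) fun d => spatialVol n d μ ν) (fun b => spatialVol n b lam σ) =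
      B ν lam * spatialMetric n μ σ - B ν σ * spatialMetric n μ lam
        - (B μ lam * spatialMetric n ν σ - B μ σ * spatialMetric n ν lam) := by
  simp only [η_spatialVol_of_trace_eq_zero htr hnB _ μ ν, η_sub_left, η_η_spatialVol hn (hBn _)]

section Weyl

variable {W : T4}

lemma IsWeyl.isWeylTensor (hW : IsWeyl W) : IsWeylTensor W where
  swap_left a b c d := by simpa only [eval4_e4] using hW.1 (e4 b) (e4 a) (e4 c) (e4 d)
  swap_right a b c d := by simpa only [eval4_e4] using hW.2.1 (e4 a) (e4 b) (e4 d) (e4 c)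
  bianchi a b c d := by simpa only [eval4_e4] using hW.2.2.2.1 (e4 a) (e4 b) (e4 c) (e4 d)
  trace b d := by
    have h := hW.2.2.2.2 (e4 b) (e4 d)
    simp only [eval4_e4] at h
    simpa [ηm] using h

lemma IsWeylTensor.pair_swap (hW : IsWeylTensor W) (a b c d : Fin 4) :
    W c d a b = W a b c d := by
  linarith [hW.bianchi a b c d, hW.bianchi b c d a, hW.bianchi c d a b, hW.bianchi d a b c,
    hW.swap_left a b c d, hW.swap_left c d a b, hW.swap_left a c b d, hW.swap_right a c b d,
    hW.swap_left b d c a, hW.swap_right b d a c, hW.swap_left a d b c, hW.swap_left b c d a]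

lemma IsWeylTensor.isTwoForm (hW : IsWeylTensor W) (μ ν : Fin 4) : IsTwoForm (W μ ν) :=
  hW.swap_right μ ν

lemma IsWeylTensor.rightDual_rightDual (hW : IsWeylTensor W) :
    rightDual (rightDual W) = -W := by
  ext1 μ
  ext1 ν
  exact (hW.isTwoForm μ ν).hodge_hodge

-- The Bianchi identity of the dual comes from the trace condition, and vice versa.
lemma IsWeylTensor.rightDual_bianchi (hW : IsWeylTensor W) (a b c d : Fin 4) :
    rightDual W a b c d + rightDual W a c d b + rightDual W a d b c = 0 := by
  have trace_left (y : Fin 4) : ∑ x, ηm x x * W a x x y = 0 := by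
    simpa [hW.swap_left _ a] using hW.trace a y
  have trace_right (x : Fin 4) : ∑ y, ηm y y * W a y x y = 0 := by
    simpa [hW.swap_right a _ x] using trace_left x
  have cramer (x y : Fin 4) :=
    dotProduct_mul_volv (fun z => W a z x y) (e4 b) (e4 x) (e4 y) (e4 c) (e4 d)
  simp only [dotProduct_e4] at cramer
  have hleft :
      ∑ x, ∑ y, ηm y y * volv (e4 b) (e4 y) (e4 c) (e4 d) * (ηm x x * W a x x y) = 0 := by
    rw [Finset.sum_comm]
    simp only [← Finset.mul_sum, trace_left, mul_zero, Finset.sum_const_zero]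
  have hright :
      ∑ x, ∑ y, ηm x x * volv (e4 x) (e4 b) (e4 c) (e4 d) * (ηm y y * W a y x y) = 0 := by
    simp only [← Finset.mul_sum, trace_right, mul_zero, Finset.sum_const_zero]
  have hcontract : rightDual W a b c d = rightDual W a c b d + rightDual W a d c b
      + (1/2) * (∑ x, ∑ y, ηm y y * volv (e4 b) (e4 y) (e4 c) (e4 d) * (ηm x x * W a x x y)
        + ∑ x, ∑ y, ηm x x * volv (e4 x) (e4 b) (e4 c) (e4 d) * (ηm y y * W a y x y)) := by
    simp only [rightDual_apply, hodge_apply, volc, Finset.mul_sum, ← Finset.sum_add_distrib]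
    refine Finset.sum_congr rfl fun x _ => Finset.sum_congr rfl fun y _ => ?_
    linear_combination (1/2) * ηm x x * ηm y y * cramer x y
  rw [hleft, hright] at hcontract
  have swap_right (x y z : Fin 4) : rightDual W a x z y = -rightDual W a x y z :=
    isTwoForm_hodge (W a x) y z
  linarith [swap_right c b d, swap_right d c b]

lemma IsWeylTensor.rightDual_trace (hW : IsWeylTensor W) (b d : Fin 4) :
    ∑ a, ηm a a * rightDual W a b a d = 0 := by
  have hcyclic := sum_eq_zero_of_cyclic
    (fun a x y => ηm a a * ηm x x * ηm y y * W a b x y * volc x y a d) fun a x y => by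
      have h₁ : volc y a x d = volc x y a d := volv_rotate_left (e4 x) (e4 y) (e4 a) (e4 d)
      have h₂ : volc a x y d = volc x y a d :=
        (volv_rotate_left (e4 a) (e4 x) (e4 y) (e4 d)).symm
      simp only [h₁, h₂, hW.swap_left b]
      linear_combination
        -ηm a a * ηm x x * ηm y y * volc x y a d * hW.bianchi b a x y
  calc ∑ a, ηm a a * rightDual W a b a d
      = (1/2) * ∑ a, ∑ x, ∑ y, ηm a a * ηm x x * ηm y y * W a b x y * volc x y a d := by
        simp only [rightDual_apply, hodge_apply, Finset.mul_sum]
        refine Finset.sum_congr rfl fun a _ => Finset.sum_congr rfl fun x _ =>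
          Finset.sum_congr rfl fun y _ => by ring
    _ = 0 := by rw [hcyclic, mul_zero]

lemma IsWeylTensor.dual (hW : IsWeylTensor W) : IsWeylTensor (rightDual W) where
  swap_left a b c d := by
    have h : W b a = -W a b := by
      ext
      exact hW.swap_left ..
    simp only [rightDual_apply, h, hodge_neg, Pi.neg_apply]
  swap_right a b := isTwoForm_hodge (W a b)
  bianchi := hW.rightDual_bianchi
  trace := hW.rightDual_trace

lemma slice_rightDual (W : T4) (n : V4) (σ : Fin 4) :
    slice (rightDual W) n σ = hodge (slice W n σ) := by
  ext a b
  simp only [slice, rightDual_apply, hodge_apply, Finset.mul_sum, Finset.sum_mul]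
  rw [Finset.sum_comm]
  refine Finset.sum_congr rfl fun x _ => ?_
  rw [Finset.sum_comm]
  exact Finset.sum_congr rfl fun y _ => Finset.sum_congr rfl fun c _ => by ring

lemma Epart_apply (W : T4) (n : V4) (a b : Fin 4) :
    Epart W n a b = ∑ c, ∑ d, n c * n d * W a c b d := by
  simp [Epart, eval4, e4_apply, mul_comm, mul_left_comm]

lemma Bpart_eq_Epart (W : T4) (n : V4) : Bpart W n = Epart (rightDual W) n := rfl

lemma IsWeylTensor.isTwoForm_slice (hW : IsWeylTensor W) (n : V4) (σ : Fin 4) :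
    IsTwoForm (slice W n σ) := fun a b => by
  simp [slice, hW.swap_right _ _ a b]

lemma IsWeylTensor.interiorProd_slice (hW : IsWeylTensor W) (n : V4) (σ : Fin 4) :
    interiorProd n (slice W n σ) = -Epart W n σ := by
  ext b
  simp only [interiorProd, slice, Epart_apply, Pi.neg_apply, Finset.mul_sum,
    ← Finset.sum_neg_distrib]
  rw [Finset.sum_comm]
  refine Finset.sum_congr rfl fun c _ => Finset.sum_congr rfl fun a _ => ?_
  rw [hW.swap_right σ c b a]
  ring

lemma IsWeylTensor.interiorProd_eq_neg_slice (hW : IsWeylTensor W) (n : V4) (μ ν σ : Fin 4) :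
    interiorProd n (W μ ν) σ = -slice W n σ μ ν := by
  simp only [interiorProd, slice, ← Finset.sum_neg_distrib]
  refine Finset.sum_congr rfl fun a _ => ?_
  rw [← hW.pair_swap μ ν, hW.swap_left σ, mul_neg]

lemma IsWeylTensor.Epart_comm (hW : IsWeylTensor W) (n : V4) (a b : Fin 4) :
    Epart W n a b = Epart W n b a := by
  simp only [Epart_apply]
  rw [Finset.sum_comm]
  exact Finset.sum_congr rfl fun d _ => Finset.sum_congr rfl fun c _ => by
    rw [hW.pair_swap, mul_comm (n c)]

lemma IsWeylTensor.sum_mul_Epart (hW : IsWeylTensor W) (n : V4) (σ : Fin 4) :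
    ∑ a, n a * Epart W n σ a = 0 := by
  have h := (hW.isTwoForm_slice n σ).sum_mul_interiorProd n
  simpa [hW.interiorProd_slice] using h

lemma IsWeylTensor.interiorProd_Epart (hW : IsWeylTensor W) (n : V4) :
    interiorProd n (Epart W n) = 0 := by
  ext σ
  simpa [interiorProd, hW.Epart_comm n _ σ] using hW.sum_mul_Epart n σ

lemma IsWeylTensor.trace_Epart (hW : IsWeylTensor W) (n : V4) :
    ∑ a, ηm a a * Epart W n a a = 0 := by
  calc ∑ a, ηm a a * Epart W n a a
      = ∑ c, ∑ d, n c * n d * ∑ a, ηm a a * W a c a d := by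
        simp only [Epart_apply, Finset.mul_sum]
        rw [Finset.sum_comm]
        refine Finset.sum_congr rfl fun c _ => ?_
        rw [Finset.sum_comm]
        exact Finset.sum_congr rfl fun d _ => Finset.sum_congr rfl fun a _ => by ring
    _ = 0 := by simp only [hW.trace, mul_zero, Finset.sum_const_zero]

lemma IsWeylTensor.slice_rightDual_eq_electric_magnetic (hW : IsWeylTensor W) {n : V4}
    (hn : η n n = -1) (σ lam ρ : Fin 4) :
    slice (rightDual W) n σ lam ρ = lower n lam * Bpart W n σ ρ - lower n ρ * Bpart W n σ lam
      + η (Epart W n σ) (fun b => spatialVol n b lam ρ) := by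
  have h := (hW.isTwoForm_slice n σ).hodge_decomposition n lam ρ
  rw [← slice_rightDual, hW.dual.interiorProd_slice, hW.interiorProd_slice, hn] at h
  simp only [Bpart_eq_Epart, η, Pi.neg_apply] at h ⊢
  linear_combination -h

lemma IsWeylTensor.slice_eq_electric_magnetic (hW : IsWeylTensor W) {n : V4} (hn : η n n = -1)
    (σ lam ρ : Fin 4) :
    slice W n σ lam ρ = lower n lam * Epart W n σ ρ - lower n ρ * Epart W n σ lam
      - η (Bpart W n σ) (fun b => spatialVol n b lam ρ) := by
  have slice_neg : slice (-W) n σ lam ρ = -slice W n σ lam ρ := by simp [slice]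
  have Epart_neg (a b : Fin 4) : Epart (-W) n a b = -Epart W n a b := by simp [Epart_apply]
  have h := hW.dual.slice_rightDual_eq_electric_magnetic hn σ lam ρ
  simp only [Bpart_eq_Epart, hW.rightDual_rightDual, slice_neg, Epart_neg] at h ⊢
  linear_combination -h

lemma IsWeylTensor.rightDual_eq_slices (hW : IsWeylTensor W) {n : V4} (hn : η n n = -1)
    (μ ν lam σ : Fin 4) :
    rightDual W μ ν lam σ =
      lower n lam * slice (rightDual W) n σ μ ν - lower n σ * slice (rightDual W) n lam μ ν
        + η (fun b => slice W n b μ ν) (fun b => spatialVol n b lam σ) := by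
  have h := (hW.isTwoForm μ ν).hodge_decomposition n lam σ
  simp only [← rightDual_apply, hW.dual.interiorProd_eq_neg_slice, hn] at h
  rw [funext (hW.interiorProd_eq_neg_slice n μ ν)] at h
  simp only [η] at h ⊢
  linear_combination -h

lemma IsWeylTensor.rightDual_eq_electric_magnetic (hW : IsWeylTensor W) {n : V4}
    (hn : η n n = -1) (μ ν lam σ : Fin 4) :
    rightDual W μ ν lam σ =
      euclideanMetric n μ lam * Bpart W n σ ν - euclideanMetric n μ σ * Bpart W n lam ν
        - (euclideanMetric n ν lam * Bpart W n σ μ - euclideanMetric n ν σ * Bpart W n lam μ)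
        + η (fun τ => lower n lam * Epart W n σ τ - lower n σ * Epart W n lam τ)
            (fun τ => spatialVol n τ μ ν)
        + η (fun τ => lower n μ * Epart W n ν τ - lower n ν * Epart W n μ τ)
            (fun τ => spatialVol n τ lam σ) := by
  have hBB : η (fun b => η (Bpart W n b) fun d => spatialVol n d μ ν)
      (fun b => spatialVol n b lam σ) = _ :=
    η_η_spatialVol_of_trace_eq_zero hn (hW.dual.trace_Epart n)
      (hW.dual.interiorProd_Epart n) (hW.dual.sum_mul_Epart n) μ ν lam σ
  have B_comm (a b : Fin 4) : Bpart W n a b = Bpart W n b a := hW.dual.Epart_comm n a b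
  rw [hW.rightDual_eq_slices hn]
  simp only [hW.slice_eq_electric_magnetic hn, hW.slice_rightDual_eq_electric_magnetic hn,
    η_sub_left, hBB, ← Bpart_eq_Epart, B_comm ν, B_comm μ, hW.Epart_comm n _ μ,
    hW.Epart_comm n _ ν, spatialMetric, euclideanMetric]
  simp only [η]
  ring

end Weyl

/-- the right dual of a Weyl candidate is reconstructed from the electric and
magnetic parts of `W`. -/
theorem stmt_11 (W : T4) (hW : IsWeyl W) (n : V4) (hn : η n n = -1)
    (E B : T2) (hE : E = Epart W n) (hB : B = Bpart W n)
    (nl : Fin 4 → ℝ) (hnl : ∀ μ, nl μ = η n (e4 μ))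
    (l : T2) (hl : l = fun μ ν => ηm μ ν + 2 * nl μ * nl ν)
    (εc : Fin 4 → Fin 4 → Fin 4 → ℝ)
    (hεc : ∀ a b c, εc a b c = volv n (e4 a) (e4 b) (e4 c)) :
    ∀ μ ν lam σ, rightDual W μ ν lam σ =
      2 * ((1/2) * (l μ lam * B σ ν - l μ σ * B lam ν)
        - (1/2) * (l ν lam * B σ μ - l ν σ * B lam μ)
        + (1/2) * (∑ τ : Fin 4, ∑ τ' : Fin 4,
            (nl lam * E σ τ - nl σ * E lam τ) * ηm τ τ' * εc τ' μ ν)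
        + (1/2) * (∑ τ : Fin 4, ∑ τ' : Fin 4,
            (nl μ * E ν τ - nl ν * E μ τ) * ηm τ τ' * εc τ' lam σ)) := by
  intro μ ν lam σ
  obtain rfl : nl = lower n := funext hnl
  obtain rfl : εc = spatialVol n := by
    ext
    exact hεc ..
  subst hE hB hl
  simp only [sum_sum_mul_ηm_mul]
  rw [hW.isWeylTensor.rightDual_eq_electric_magnetic hn]
  simp only [euclideanMetric]
  ring
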